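/- arXiv:2307.00942 — 8 statements merged into one kernel-verified Lean document; each statement's English description precedes it below -/
import Mathlib

section
/- Let K ≥ 0, B > 0, and let g : ℝ → ℝ be (K,B)-convex (i). Suppose there exist x₀ ∈ ℝ and a with 0 < a ≤ B such that K + g(x₀ + a) − g(x₀) ≤ 0 (it is optimal to place an order of a units at inventory level x₀). Then g is nonincreasing on (−∞, x₀], i.e., g(u) ≥ g(w) whenever u ≤ w ≤ x₀. -/
/-!
Ordering at `x₀` makes the right-hand side of the convexity inequality at `x = x₀` nonpositive, so
every backward difference quotient of `g` at a point `y ≤ x₀` with step in `(0, B]` is nonpositive.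
This is monotonicity over distances at most `B`; an arbitrary distance is covered by finitely many
steps of length at most `B`, since `ℝ` is Archimedean.
-/

/-- `(K,B)`-convexity (i): for all `y ≤ x`, `0 < a ≤ B`, `0 < b ≤ B`,
`(K + g(x+a) − g(x))/a ≥ (g(y) − g(y−b))/b`. -/
def KBConvexI (K B : ℝ) (g : ℝ → ℝ) : Prop :=
  ∀ x y a b : ℝ, y ≤ x → 0 < a → a ≤ B → 0 < b → b ≤ B →
    (g y - g (y - b)) / b ≤ (K + g (x + a) - g x) / a

/-- If `g` is `(K,B)`-convex (i) and it is optimal to place an order of `a ∈ (0,B]` units at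
inventory level `x₀` (i.e. `K + g(x₀+a) − g(x₀) ≤ 0`), then `g` is nonincreasing on
`(−∞, x₀]`. -/
theorem nonincreasing_on_ordering_region (K B : ℝ) (hK : 0 ≤ K) (hB : 0 < B)
    (g : ℝ → ℝ) (hgi : KBConvexI K B g)
    (x₀ a : ℝ) (ha : 0 < a) (haB : a ≤ B)
    (hord : K + g (x₀ + a) - g x₀ ≤ 0) :
    ∀ u w : ℝ, u ≤ w → w ≤ x₀ → g w ≤ g u := by
  -- A single step of length at most `B` below `x₀` cannot increase `g`.
  have step : ∀ y b : ℝ, y ≤ x₀ → 0 ≤ b → b ≤ B → g y ≤ g (y - b) := by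
    intro y b hy hb hbB
    rcases hb.eq_or_lt with rfl | hb
    · simp
    · have h := (hgi x₀ y a b hy ha haB hb hbB).trans
        (div_nonpos_of_nonpos_of_nonneg hord ha.le)
      rw [div_le_iff₀ hb] at h
      linarith
  -- Longer distances are covered by chaining steps of length `B`.
  have chain : ∀ (n : ℕ) (u w : ℝ), u ≤ w → w ≤ x₀ → w - u ≤ n * B → g w ≤ g u := by
    intro n
    induction n with
    | zero =>
      intro u w huw _ hn
      have : u = w := by
        simp only [Nat.cast_zero, zero_mul] at hn
        linarith
      rw [this]
    | succ n ih =>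
      intro u w huw hw hn
      push_cast at hn
      rcases le_total (w - u) B with h | h
      · simpa using step w (w - u) hw (sub_nonneg.2 huw) h
      · exact (step w B hw hB.le le_rfl).trans
          (ih u (w - B) (by linarith) (by linarith) (by linarith))
  intro u w huw hw
  obtain ⟨n, hn⟩ := exists_nat_ge ((w - u) / B)
  exact chain n u w huw hw ((div_le_iff₀ hB).1 hn)
end

section
/- Let K ≥ 0, B > 0, and let g : ℝ → ℝ be (K,B)-convex (i) with g(x) → +∞ as x → +∞. Then the set { x ∈ ℝ : there exists a with 0 < a ≤ B and K + g(x + a) − g(x) ≤ 0 } of inventory levels at which it is optimal to place an order is bounded above. (Hence there is a maximum inventory level s_m beyond which no ordering is optimal.) -/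
/-- If `g` is `(K,B)`-convex (i) and `g → +∞` at `+∞`, then the set of inventory levels at
which it is optimal to place an order (i.e. `K + g(x+a) − g(x) ≤ 0` for some
`a ∈ (0,B]`) is bounded above. -/
theorem ordering_set_bddAbove (K B : ℝ) (hK : 0 ≤ K) (hB : 0 < B)
    (g : ℝ → ℝ) (hgi : KBConvexI K B g)
    (hcoer : Filter.Tendsto g Filter.atTop Filter.atTop) :
    BddAbove {x : ℝ | ∃ a : ℝ, 0 < a ∧ a ≤ B ∧ K + g (x + a) - g x ≤ 0} := by
  by_contra hunb
  -- An ordering level beyond `y` makes every slope up to step `B` ending at `y` nonpositive.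
  have hstep : ∀ y, g y ≤ g (y - B) := by
    intro y
    obtain ⟨x, ⟨a, ha, haB, hxa⟩, hyx⟩ := not_bddAbove_iff.mp hunb y
    have h := (hgi x y a B hyx.le ha haB hB le_rfl).trans
      (div_nonpos_of_nonpos_of_nonneg hxa ha.le)
    rw [div_le_iff₀ hB] at h
    linarith
  have hbound : ∀ n : ℕ, g (n * B) ≤ g 0 := by
    intro n
    induction n with
    | zero => simp
    | succ k ih =>
      have h := hstep ((k + 1 : ℕ) * B)
      rw [show ((k + 1 : ℕ) : ℝ) * B - B = k * B by push_cast; ring] at h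
      exact h.trans ih
  have hlim : Filter.Tendsto (fun n : ℕ => g (n * B)) Filter.atTop Filter.atTop :=
    hcoer.comp (tendsto_natCast_atTop_atTop.atTop_mul_const hB)
  obtain ⟨n, hn⟩ := (hlim.eventually_gt_atTop (g 0)).exists
  exact absurd (hbound n) (not_le.mpr hn)
end

section
/- Let K ≥ 0, B > 0 and let g : ℝ → ℝ be continuous. Let s_m ∈ ℝ be such that: g is nonincreasing on (−∞, s_m]; K + inf_{y ∈ [s_m, s_m+B]} g(y) − g(s_m) ≤ 0; and K + inf_{y ∈ [x, x+B]} g(y) − g(x) > 0 for every x > s_m. Let S_m ∈ [s_m, s_m + B] be a point attaining the infimum of g over [s_m, s_m + B]. Then: (a) if S* is any global minimizer of g with S* ≥ s_m, the least point of [s_m, s_m+B] attaining the infimum of g over [s_m, s_m+B] is ≤ S*; (b) g(S_m) ≤ g(x) for every x < S_m; (c) g(s_m) > g(x) for every x with s_m < x ≤ S_m. -/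
/-!
Since `Sm` minimises `g` over `[sm, sm + B]`, the optimality of ordering at `sm` reads
`K + g Sm ≤ g sm`. For `sm < x ≤ Sm` the point `Sm` is still reachable from `x`, so the
non-optimality of ordering at `x` gives `g x < K + g Sm ≤ g sm`, which is (c). Part (b) is
minimality on `[sm, Sm)` and monotonicity below `sm`. For (a), a global minimiser
`Sstar ≥ sm` either lies in `[sm, sm + B]`, and then belongs to the set of minimisers there,
or lies beyond `sm + B ≥ Sm`.
-/

/-- Properties of the largest reorder point `s_m` and associated order-up-to level `S_m`:
with `g` continuous, nonincreasing on `(−∞, s_m]`, ordering (weakly) optimal at `s_m`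
and not optimal at any `x > s_m`, and `S_m ∈ [s_m, s_m+B]` attaining the infimum of `g`
over `[s_m, s_m+B]`, we have:
(a) the least point of `[s_m, s_m+B]` attaining the infimum of `g` over `[s_m, s_m+B]`
    is `≤ S*` for any global minimizer `S* ≥ s_m` of `g`;
(b) `g(S_m) ≤ g(x)` for every `x < S_m`;
(c) `g(s_m) > g(x)` for every `x` with `s_m < x ≤ S_m`. -/
theorem sm_Sm_properties (K B : ℝ) (hK : 0 ≤ K) (hB : 0 < B)
    (g : ℝ → ℝ) (hgc : Continuous g)
    (sm : ℝ)
    (hmono : ∀ u w : ℝ, u ≤ w → w ≤ sm → g w ≤ g u)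
    (horder : K + sInf (g '' Set.Icc sm (sm + B)) - g sm ≤ 0)
    (hnoorder : ∀ x, sm < x → 0 < K + sInf (g '' Set.Icc x (x + B)) - g x)
    (Sm : ℝ) (hSm : Sm ∈ Set.Icc sm (sm + B))
    (hSmin : ∀ y ∈ Set.Icc sm (sm + B), g Sm ≤ g y) :
    (∀ Sstar : ℝ, (∀ x : ℝ, g Sstar ≤ g x) → sm ≤ Sstar →
      sInf {y : ℝ | y ∈ Set.Icc sm (sm + B) ∧
        ∀ z ∈ Set.Icc sm (sm + B), g y ≤ g z} ≤ Sstar) ∧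
    (∀ x : ℝ, x < Sm → g Sm ≤ g x) ∧
    (∀ x : ℝ, sm < x → x ≤ Sm → g x < g sm) := by
  have hinf : sInf (g '' Set.Icc sm (sm + B)) = g Sm := by
    refine IsLeast.csInf_eq ⟨⟨Sm, hSm, rfl⟩, ?_⟩
    rintro _ ⟨y, hy, rfl⟩
    exact hSmin y hy
  rw [hinf] at horder
  refine ⟨?_, ?_, ?_⟩
  · intro Sstar hmin hge
    have hbdd : BddBelow {y : ℝ | y ∈ Set.Icc sm (sm + B) ∧
        ∀ z ∈ Set.Icc sm (sm + B), g y ≤ g z} := ⟨sm, fun y hy => hy.1.1⟩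
    by_cases h : Sstar ≤ sm + B
    · exact csInf_le hbdd ⟨⟨hge, h⟩, fun z _ => hmin z⟩
    · have hle := csInf_le hbdd ⟨hSm, hSmin⟩
      linarith [hSm.2]
  · intro x hx
    by_cases h : sm ≤ x
    · exact hSmin x ⟨h, by linarith [hSm.2]⟩
    · exact (hSmin sm ⟨le_rfl, by linarith⟩).trans (hmono x sm (by linarith) le_rfl)
  · intro x hx hxS
    have hle : sInf (g '' Set.Icc x (x + B)) ≤ g Sm :=
      -- Continuity of `g` makes the image compact, so that the infimum is a genuine one.
      csInf_le (isCompact_Icc.image hgc).bddBelow ⟨Sm, ⟨hxS, by linarith [hSm.2]⟩, rfl⟩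
    linarith [hnoorder x hx]
end

section
/- Let a ≤ c be reals and let g : ℝ → ℝ satisfy g(x) ≥ g(c) for every x ∈ [a, c]. Define the quasiconvex envelope q of g on [a, c] by q(x) = sup { h(x) : h : ℝ → ℝ is quasiconvex on [a, c] and h(z) ≤ g(z) for all z ∈ [a, c] } (the supremum is well defined since the constant function g(c) is such a minorant and every minorant is bounded above by g pointwise). Then q is nonincreasing on [a, c]. -/
/-- If `g(x) ≥ g(c)` on `[a, c]`, then the quasiconvex envelope `q` of `g` on `[a, c]`
(the pointwise supremum of all quasiconvex minorants of `g` on `[a, c]`) is nonincreasing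
on `[a, c]`. -/
theorem qce_nonincreasing (a c : ℝ) (hac : a ≤ c)
    (g : ℝ → ℝ) (hg : ∀ x ∈ Set.Icc a c, g c ≤ g x)
    (q : ℝ → ℝ)
    (hq : ∀ x : ℝ, q x = sSup {v : ℝ | ∃ h : ℝ → ℝ,
      QuasiconvexOn ℝ (Set.Icc a c) h ∧ (∀ z ∈ Set.Icc a c, h z ≤ g z) ∧ h x = v}) :
    ∀ x ∈ Set.Icc a c, ∀ y ∈ Set.Icc a c, x ≤ y → q y ≤ q x := by
  intro x hx y hy hxy
  have hc : c ∈ Set.Icc a c := ⟨hac, le_rfl⟩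
  have hle : ∀ h : ℝ → ℝ, QuasiconvexOn ℝ (Set.Icc a c) h →
      (∀ z ∈ Set.Icc a c, h z ≤ g z) → h x ≤ q x := by
    intro h hqc hmin
    rw [hq x]
    refine le_csSup ⟨g x, ?_⟩ ⟨h, hqc, hmin, rfl⟩
    rintro _ ⟨k, -, hk, rfl⟩
    exact hk x hx
  have hconst : QuasiconvexOn ℝ (Set.Icc a c) (fun _ => g c) :=
    (convexOn_const (g c) (convex_Icc a c)).quasiconvexOn
  -- The constant `g c` is itself a quasiconvex minorant.
  have hgc : g c ≤ q x := hle _ hconst hg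
  rw [hq y]
  refine csSup_le ⟨g c, _, hconst, hg, rfl⟩ ?_
  rintro _ ⟨h, hqc, hmin, rfl⟩
  -- Since `y ∈ [x, c]`, quasiconvexity gives `h y ≤ max (h x) (h c)`, and `h c ≤ g c`.
  have hy' : h y ≤ max (h x) (h c) :=
    ((hqc (max (h x) (h c))).ordConnected.out
      ⟨hx, le_max_left _ _⟩ ⟨hc, le_max_right _ _⟩ ⟨hxy, hy.2⟩).2
  exact hy'.trans (max_le (hle h hqc hmin) ((hmin c hc).trans hgc))
end

section
/- Let B > 0 and let f : ℝ → ℝ be convex on ℝ and attain a global minimum at some point S. Then the function x ↦ ( inf_{y ∈ [x, x+B]} f(y) ) − f(x) is monotone nondecreasing on ℝ. Explicitly, it equals 0 for x ≥ S, f(S) − f(x) for S − B ≤ x ≤ S, and f(x + B) − f(x) for x ≤ S − B. -/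
/-!
Convexity together with the global minimizer `S` makes `f` antitone on `(-∞, S]` and monotone on
`[S, ∞)`. Hence the minimum of `f` over the window `[x, x + B]` is attained at the left endpoint
`x`, at `S`, or at the right endpoint `x + B`, according to whether the window lies to the right of
`S`, contains `S`, or lies to the left of `S`; this gives the three formulas. The resulting
function is nondecreasing on the left piece because a convex function has increasing differences
(`f (a + B) - f a ≤ f (b + B) - f b` for `a ≤ b`), on the middle piece because `f` is antitone
there, and trivially on the right piece; the pieces agree at the breakpoints `S - B` and `S`.
-/

theorem karush_increasing_differences {B : ℝ} (hB : 0 < B) {f : ℝ → ℝ}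
    (hf : ConvexOn ℝ Set.univ f) {a b : ℝ} (hab : a ≤ b) :
    f (a + B) - f a ≤ f (b + B) - f b := by
  have hd : 0 < b - a + B := by linarith
  -- `b` and `a + B` are the convex combinations of `a` and `b + B` with swapped weights `p`, `q`.
  obtain ⟨p, hp⟩ : ∃ p, p = B / (b - a + B) := ⟨_, rfl⟩
  obtain ⟨q, hq⟩ : ∃ q, q = (b - a) / (b - a + B) := ⟨_, rfl⟩
  have hp0 : 0 ≤ p := by rw [hp]; positivity
  have hq0 : 0 ≤ q := by rw [hq]; exact div_nonneg (by linarith) hd.le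
  have hpq : p + q = 1 := by rw [hp, hq]; field_simp; ring
  have hqd : q * (b - a + B) = b - a := by rw [hq]; field_simp
  have h1 := hf.2 (Set.mem_univ a) (Set.mem_univ (b + B)) hp0 hq0 hpq
  have h2 := hf.2 (Set.mem_univ (b + B)) (Set.mem_univ a) hp0 hq0 hpq
  obtain rfl : p = 1 - q := by linarith
  simp only [smul_eq_mul] at h1 h2
  rw [show (1 - q) * a + q * (b + B) = b by linear_combination hqd] at h1
  rw [show (1 - q) * (b + B) + q * a = a + B by linear_combination -hqd] at h2
  linarith

/-- A lower bound of `f` on a set that is attained there is the infimum. -/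
theorem karush_sInf_image_eq {f : ℝ → ℝ} {s : Set ℝ} {z : ℝ} (hz : z ∈ s)
    (h : ∀ y ∈ s, f z ≤ f y) : sInf (f '' s) = f z :=
  IsLeast.csInf_eq ⟨Set.mem_image_of_mem f hz, by rintro _ ⟨y, hy, rfl⟩; exact h y hy⟩

/-- Karush-type lemma: if `f` is convex on `ℝ` with global minimizer `S`, then
`x ↦ (inf_{y ∈ [x,x+B]} f(y)) − f(x)` is monotone nondecreasing; explicitly it equals `0`
for `x ≥ S`, `f(S) − f(x)` for `S − B ≤ x ≤ S`, and `f(x+B) − f(x)` for `x ≤ S − B`. -/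
theorem karush_min_minus_f (B : ℝ) (hB : 0 < B)
    (f : ℝ → ℝ) (hf : ConvexOn ℝ Set.univ f)
    (S : ℝ) (hS : ∀ y : ℝ, f S ≤ f y) :
    Monotone (fun x => sInf (f '' Set.Icc x (x + B)) - f x) ∧
    (∀ x : ℝ, S ≤ x → sInf (f '' Set.Icc x (x + B)) - f x = 0) ∧
    (∀ x : ℝ, S - B ≤ x → x ≤ S → sInf (f '' Set.Icc x (x + B)) - f x = f S - f x) ∧
    (∀ x : ℝ, x ≤ S - B → sInf (f '' Set.Icc x (x + B)) - f x = f (x + B) - f x) := by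
  have hmono : ∀ x y, S ≤ x → x ≤ y → f x ≤ f y := fun x y h1 h2 =>
    (hf.le_max_of_mem_Icc (Set.mem_univ S) (Set.mem_univ y) ⟨h1, h2⟩).trans
      (max_le (hS y) le_rfl)
  have hanti : ∀ x y, x ≤ y → y ≤ S → f y ≤ f x := fun x y h1 h2 =>
    (hf.le_max_of_mem_Icc (Set.mem_univ x) (Set.mem_univ S) ⟨h1, h2⟩).trans
      (max_le le_rfl (hS x))
  have hR : ∀ x : ℝ, S ≤ x → sInf (f '' Set.Icc x (x + B)) - f x = 0 := fun x hx => by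
    rw [karush_sInf_image_eq (f := f) (s := Set.Icc x (x + B)) (z := x) ⟨le_rfl, by linarith⟩
      fun y hy => hmono x y hx hy.1,
      sub_self]
  have hM : ∀ x : ℝ, S - B ≤ x → x ≤ S →
      sInf (f '' Set.Icc x (x + B)) - f x = f S - f x := fun x h1 h2 => by
    rw [karush_sInf_image_eq (f := f) (s := Set.Icc x (x + B)) (z := S) ⟨h2, by linarith⟩
      fun y _ => hS y]
  have hL : ∀ x : ℝ, x ≤ S - B →
      sInf (f '' Set.Icc x (x + B)) - f x = f (x + B) - f x := fun x hx => by
    rw [karush_sInf_image_eq (f := f) (s := Set.Icc x (x + B)) (z := x + B) ⟨by linarith, le_rfl⟩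
      fun y hy => hanti y (x + B) hy.2 (by linarith)]
  refine ⟨fun a b hab => ?_, hR, hM, hL⟩
  dsimp only
  rcases le_total S b with hb | hb
  · rw [hR b hb]
    rcases le_total S a with ha | ha
    · rw [hR a ha]
    rcases le_total (S - B) a with ha' | ha'
    · rw [hM a ha' ha]
      linarith [hS a]
    · rw [hL a ha']
      linarith [hanti a (a + B) (by linarith) (by linarith)]
  rcases le_total (S - B) b with hb' | hb'
  · rw [hM b hb' hb]
    rcases le_total (S - B) a with ha' | ha'
    · rw [hM a ha' (hab.trans hb)]
      linarith [hanti a b hab hb]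
    · rw [hL a ha']
      -- Compare both sides with the common value at the breakpoint `S - B`.
      have h := karush_increasing_differences hB hf ha'
      rw [sub_add_cancel] at h
      linarith [hanti (S - B) b hb' hb]
  · rw [hL b hb', hL a (hab.trans hb')]
    exact karush_increasing_differences hB hf hab
end

section
/- Let K ≥ 0, B > 0, v ∈ ℝ, and let L : ℝ → ℝ be convex on ℝ such that the function y ↦ v·y + L(y) attains a global minimum. Then the function V₁(x) = min{ 0, K + inf_{y ∈ [x, x+B]} ( v·(y − x) + L(y) ) − L(x) } is monotone nondecreasing on ℝ. -/
/-!
Substituting `y = x + t`, the second argument of the minimum is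
`K + inf_{t ∈ [0, B]} (v * t + (L (x + t) - L x))`. For fixed `t ≥ 0` the increment
`L (x + t) - L x` of the convex function `L` is nondecreasing in `x`
(`ConvexOn.increment_le`), hence so is the infimum over the fixed interval `[0, B]`.
The global minimum of `y ↦ v * y + L y` bounds the infimum from below.
-/

/-- Increments of a convex function over steps of fixed length `t` grow with the base point.
Both `a + t` and `a + d` are convex combinations of `a` and `a + d + t`, with swapped weights. -/
lemma ConvexOn.increment_le {L : ℝ → ℝ} (hL : ConvexOn ℝ Set.univ L) (a : ℝ) {d t : ℝ}
    (hd : 0 ≤ d) (ht : 0 ≤ t) : L (a + t) - L a ≤ L (a + d + t) - L (a + d) := by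
  rcases (add_nonneg hd ht).eq_or_lt with h0 | hpos
  · have hd0 : d = 0 := by linarith
    simp [hd0]
  · have hsum : d / (d + t) + t / (d + t) = 1 := by field_simp
    have hd' : 0 ≤ d / (d + t) := by positivity
    have ht' : 0 ≤ t / (d + t) := by positivity
    have h1 := hL.2 (Set.mem_univ a) (Set.mem_univ (a + d + t)) hd' ht' hsum
    have h2 := hL.2 (Set.mem_univ a) (Set.mem_univ (a + d + t)) ht' hd'
      (by rw [add_comm]; exact hsum)
    simp only [smul_eq_mul] at h1 h2
    have e1 : d / (d + t) * a + t / (d + t) * (a + d + t) = a + t := by field_simp; ring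
    have e2 : t / (d + t) * a + d / (d + t) * (a + d + t) = a + d := by field_simp; ring
    rw [e1] at h1
    rw [e2] at h2
    linear_combination h1 + h2 + (L a + L (a + d + t)) * hsum

/-- In the single-period capacitated inventory problem with fixed ordering cost `K ≥ 0`,
unit cost `v`, capacity `B > 0`, and convex expected one-period cost `L` such that
`y ↦ v·y + L(y)` attains a global minimum, the advantage function
`V₁(x) = min{0, K + inf_{y ∈ [x,x+B]} (v·(y−x) + L(y)) − L(x)}` is monotone
nondecreasing. -/
theorem V1_monotone (K B v : ℝ) (hK : 0 ≤ K) (hB : 0 < B)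
    (L : ℝ → ℝ) (hL : ConvexOn ℝ Set.univ L)
    (hmin : ∃ S : ℝ, ∀ y : ℝ, v * S + L S ≤ v * y + L y) :
    Monotone (fun x =>
      min 0 (K + sInf ((fun y => v * (y - x) + L y) '' Set.Icc x (x + B)) - L x)) := by
  intro a b hab
  obtain ⟨S, hS⟩ := hmin
  refine min_le_min le_rfl ?_
  have hbdd : BddBelow ((fun y => v * (y - a) + L y) '' Set.Icc a (a + B)) := by
    refine ⟨v * S + L S - v * a, ?_⟩
    rintro _ ⟨y, -, rfl⟩
    linarith [hS y]
  have hne : ((fun y => v * (y - b) + L y) '' Set.Icc b (b + B)).Nonempty :=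
    (Set.nonempty_Icc.2 (by linarith)).image _
  suffices h : sInf ((fun y => v * (y - a) + L y) '' Set.Icc a (a + B)) + (L b - L a) ≤
      sInf ((fun y => v * (y - b) + L y) '' Set.Icc b (b + B)) by linarith
  refine le_csInf hne ?_
  rintro _ ⟨y, ⟨hy1, hy2⟩, rfl⟩
  -- Compare `y` with the point reached from `a` by the same order quantity `y - b`.
  have h1 := csInf_le hbdd (Set.mem_image_of_mem _
    (show a + (y - b) ∈ Set.Icc a (a + B) from ⟨by linarith, by linarith⟩))
  have h2 := hL.increment_le a (sub_nonneg.2 hab) (sub_nonneg.2 hy1)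
  have e1 : a + (b - a) + (y - b) = y := by ring
  have e2 : a + (b - a) = b := by ring
  rw [e1, e2] at h2
  dsimp only at h1 ⊢
  linarith
end

section
/- Let K ≥ 0, B > 0, m ∈ ℝ, and let g : ℝ → ℝ be continuous. Define Δ(x) = K + inf_{y ∈ [x, x+B]} g(y) − g(x) and V(x) = min{0, Δ(x)}. Assume g is nonincreasing on (−∞, m], Δ(x) ≤ 0 for all x ≤ m, and Δ(x) > 0 for all x > m. Then for every x with m − B < x ≤ m: inf_{y ∈ [x, x+B]} ( g(y) + V(y) ) = inf_{y ∈ [x, x+B]} g(y). -/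
/-! The inequality `≤` holds because `V ≤ 0`. For `≥`, write `I x` for the infimum of `g` over
`[x, x + B]`; since `g y + V y = min (g y) (K + I y)`, it suffices that `I x ≤ K + I y` for
`y ∈ [x, x + B]` with `y ≤ m` (for `y > m`, `V y = 0`). Let `z` be a minimizer of `g` on
`[y, y + B]`. If `z ≤ x + B`, then `I x ≤ g z ≤ K + g z`. Otherwise `z ∈ [x + B, x + 2B]`, and
since `x + B > m` it is not profitable to order at `x + B`, so
`I x ≤ g (x + B) < K + I (x + B) ≤ K + g z`. -/

/-- In the unsaturated-ordering region `m − B < x ≤ m`, with `g` continuous, nonincreasing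
on `(−∞, m]`, `Δ(x) = K + inf_{y ∈ [x,x+B]} g(y) − g(x) ≤ 0` for `x ≤ m` and `Δ(x) > 0`
for `x > m`, and `V(x) = min{0, Δ(x)}`:
`inf_{y ∈ [x,x+B]} (g(y) + V(y)) = inf_{y ∈ [x,x+B]} g(y)`. -/
theorem unsaturated_region_identity (K B m : ℝ) (hK : 0 ≤ K) (hB : 0 < B)
    (g : ℝ → ℝ) (hgc : Continuous g)
    (Δ V : ℝ → ℝ)
    (hΔ : ∀ x : ℝ, Δ x = K + sInf (g '' Set.Icc x (x + B)) - g x)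
    (hV : ∀ x : ℝ, V x = min 0 (Δ x))
    (hmono : ∀ u w : ℝ, u ≤ w → w ≤ m → g w ≤ g u)
    (hord : ∀ x ≤ m, Δ x ≤ 0)
    (hnoord : ∀ x : ℝ, m < x → 0 < Δ x) :
    ∀ x : ℝ, m - B < x → x ≤ m →
      sInf ((fun y => g y + V y) '' Set.Icc x (x + B)) = sInf (g '' Set.Icc x (x + B)) := by
  intro x hx hxm
  have hbdd : ∀ a, BddBelow (g '' Set.Icc a (a + B)) := fun a =>
    (isCompact_Icc.image hgc).bddBelow
  have hI : ∀ a z, a ≤ z → z ≤ a + B → sInf (g '' Set.Icc a (a + B)) ≤ g z :=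
    fun a z h1 h2 => csInf_le (hbdd a) ⟨z, ⟨h1, h2⟩, rfl⟩
  have hne : (Set.Icc x (x + B)).Nonempty := Set.nonempty_Icc.2 (by linarith)
  have key : ∀ y ∈ Set.Icc x (x + B), sInf (g '' Set.Icc x (x + B)) ≤ g y + V y := by
    rintro y ⟨hy1, hy2⟩
    have hy := hI x y hy1 hy2
    rcases lt_or_ge m y with hmy | hym
    · rw [hV, min_eq_left (hnoord y hmy).le]
      linarith
    · rw [hV, min_eq_right (hord y hym), hΔ]
      obtain ⟨z, ⟨hz1, hz2⟩, hz⟩ := (isCompact_Icc.image hgc).sInf_mem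
        ((Set.nonempty_Icc.2 (by linarith : y ≤ y + B)).image g)
      rw [← hz]
      rcases le_or_gt z (x + B) with hzx | hzx
      · have := hI x z (by linarith) hzx
        linarith
      · -- Ordering at `x + B > m` is not worth `K`, and `z ≤ m + B < x + 2B` is reachable from it.
        have h1 := hnoord (x + B) (by linarith)
        rw [hΔ] at h1
        have h2 := hI (x + B) z hzx.le (by linarith)
        have h3 := hI x (x + B) (by linarith) le_rfl
        linarith
  apply le_antisymm
  · refine le_csInf (hne.image g) ?_
    rintro _ ⟨y, hy, rfl⟩
    have hVy : V y ≤ 0 := by rw [hV]; exact min_le_left _ _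
    have hle : sInf ((fun y => g y + V y) '' Set.Icc x (x + B)) ≤ g y + V y :=
      csInf_le ⟨_, by rintro _ ⟨w, hw, rfl⟩; exact key w hw⟩ ⟨y, hy, rfl⟩
    linarith
  · refine le_csInf (hne.image _) ?_
    rintro _ ⟨y, hy, rfl⟩
    exact key y hy
end

section
/- Let K ≥ 0, B > 0, v ∈ ℝ, m ∈ ℝ, and let g : ℝ → ℝ be continuous. Define Δ(x) = K + inf_{y ∈ [x, x+B]} g(y) − g(x), V(x) = min{0, Δ(x)}, and C(x) = −v·x + min{ g(x), K + inf_{y ∈ [x, x+B]} g(y) }. Assume g is nonincreasing on (−∞, m], Δ(x) ≤ 0 for all x ≤ m, and Δ(x) > 0 for all x > m. Then the function W(x) = min{ 0, K + inf_{y ∈ [x, x+B]} ( v·(y − x) + C(y) ) − C(x) } satisfies W(x) = V(x + B) for every x ≤ m − B and W(x) = 0 for every x > m − B; consequently, if V is monotone nondecreasing on ℝ then W is monotone nondecreasing on ℝ. -/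
/-!
Write `I x = inf_{[x, x+B]} g` and `h y = C y + v * y = min (g y) (K + I y)`, so that
`W x = min 0 (K + inf_{[x, x+B]} h - h x)`. By the order property, `h = K + I` on `(-∞, m]` and
`h = g` on `(m, ∞)`.

If `x + B ≤ m`, then `I` is nonincreasing on `(-∞, m]`, so the infimum of `h` is attained at
`x + B`; since also `I x = g (x + B)`, the difference is exactly `Δ (x + B)`.

If `x + B > m`, then `h x ≤ K + h y` for all `y ∈ [x, x + B]`. The only delicate case is `y ≤ m`,
where `I x ≤ K + I y` is needed: a point `z ∈ [y, y + B]` beyond `x + B` lies in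
`[x + B, x + 2B]`, and `Δ (x + B) > 0` gives `g z + K > g (x + B) ≥ I x`.
-/

/-- Piecewise identity for the single-step advantage function: with `g` continuous,
nonincreasing on `(−∞, m]`, `Δ(x) = K + inf_{y ∈ [x,x+B]} g(y) − g(x) ≤ 0` for `x ≤ m`
and `Δ(x) > 0` for `x > m`, `V(x) = min{0, Δ(x)}`, and
`C(x) = −v·x + min{g(x), K + inf_{y ∈ [x,x+B]} g(y)}`, the function
`W(x) = min{0, K + inf_{y ∈ [x,x+B]} (v·(y−x) + C(y)) − C(x)}` satisfies
`W(x) = V(x+B)` for `x ≤ m − B` and `W(x) = 0` for `x > m − B`; consequently, if `V` is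
monotone nondecreasing then so is `W`. -/
theorem W_piecewise (K B v m : ℝ) (hK : 0 ≤ K) (hB : 0 < B)
    (g : ℝ → ℝ) (hgc : Continuous g)
    (Δ V C W : ℝ → ℝ)
    (hΔ : ∀ x : ℝ, Δ x = K + sInf (g '' Set.Icc x (x + B)) - g x)
    (hV : ∀ x : ℝ, V x = min 0 (Δ x))
    (hC : ∀ x : ℝ, C x = -v * x + min (g x) (K + sInf (g '' Set.Icc x (x + B))))
    (hW : ∀ x : ℝ, W x = min 0
      (K + sInf ((fun y => v * (y - x) + C y) '' Set.Icc x (x + B)) - C x))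
    (hmono : ∀ u w : ℝ, u ≤ w → w ≤ m → g w ≤ g u)
    (hord : ∀ x ≤ m, Δ x ≤ 0)
    (hnoord : ∀ x : ℝ, m < x → 0 < Δ x) :
    (∀ x ≤ m - B, W x = V (x + B)) ∧
    (∀ x : ℝ, m - B < x → W x = 0) ∧
    (Monotone V → Monotone W) := by
  obtain ⟨I, hI⟩ : ∃ I : ℝ → ℝ, ∀ x, I x = sInf (g '' Set.Icc x (x + B)) := ⟨_, fun _ => rfl⟩
  have I_le : ∀ x z, x ≤ z → z ≤ x + B → I x ≤ g z := by
    intro x z h1 h2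
    rw [hI]
    exact csInf_le (isCompact_Icc.image hgc).bddBelow ⟨z, ⟨h1, h2⟩, rfl⟩
  have le_I : ∀ x c, (∀ z, x ≤ z → z ≤ x + B → c ≤ g z) → c ≤ I x := by
    intro x c h
    rw [hI]
    refine le_csInf ((Set.nonempty_Icc.2 (by linarith)).image g) ?_
    rintro _ ⟨z, hz, rfl⟩
    exact h z hz.1 hz.2
  simp only [← hI] at hΔ hC
  have C_low : ∀ y ≤ m, C y = -v * y + (K + I y) := by
    intro y hy
    have := hord y hy
    rw [hΔ] at this
    rw [hC, min_eq_right (by linarith)]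
  have C_high : ∀ y, m < y → C y = -v * y + g y := by
    intro y hy
    have := hnoord y hy
    rw [hΔ] at this
    rw [hC, min_eq_left (by linarith)]
  have I_anti : ∀ y w, y ≤ w → w ≤ m → I w ≤ I y := by
    intro y w hyw hw
    refine le_I _ _ fun z hz1 hz2 => ?_
    rcases le_total w z with h | h
    · exact I_le w z h (by linarith)
    · exact (I_le w w le_rfl (by linarith)).trans (hmono z w h hw)
  have part1 : ∀ x ≤ m - B, W x = V (x + B) := by
    intro x hx
    have hIx : I x = g (x + B) :=
      le_antisymm (I_le _ _ (by linarith) le_rfl)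
        (le_I _ _ fun z _ hz => hmono z (x + B) hz (by linarith))
    have hleast : IsLeast ((fun y => v * (y - x) + C y) '' Set.Icc x (x + B))
        (-v * x + (K + I (x + B))) := by
      constructor
      · refine ⟨x + B, ⟨by linarith, le_rfl⟩, ?_⟩
        simp only
        rw [C_low _ (by linarith)]
        ring
      · rintro _ ⟨y, hy, rfl⟩
        have := I_anti y (x + B) hy.2 (by linarith)
        simp only
        rw [C_low _ (by linarith [hy.2])]
        linarith
    rw [hW, hV, hΔ, hleast.csInf_eq, C_low x (by linarith), hIx]
    congr 1
    ring
  have part2 : ∀ x : ℝ, m - B < x → W x = 0 := by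
    intro x hx
    have hJ : C x - K ≤ sInf ((fun y => v * (y - x) + C y) '' Set.Icc x (x + B)) := by
      refine le_csInf ((Set.nonempty_Icc.2 (by linarith)).image _) ?_
      rintro _ ⟨y, ⟨hy1, hy2⟩, rfl⟩
      simp only
      have hCx : C x ≤ -v * x + (K + I x) := by
        rw [hC]
        linarith [min_le_right (g x) (K + I x)]
      rcases lt_or_ge m y with hy | hy
      · rw [C_high y hy]
        linarith [I_le x y hy1 hy2]
      · rw [C_low y hy]
        have : I x - K ≤ I y := by
          refine le_I _ _ fun z hz1 hz2 => ?_
          rcases le_total z (x + B) with h | h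
          · linarith [I_le x z (by linarith) h]
          -- `z` is reachable from `x + B > m`, where ordering is not worth its fixed cost.
          · have h1 := hnoord (x + B) (by linarith)
            rw [hΔ] at h1
            have h2 := I_le (x + B) z h (by linarith)
            have h3 := I_le x (x + B) (by linarith) le_rfl
            linarith
        linarith
    rw [hW]
    exact min_eq_left (by linarith)
  refine ⟨part1, part2, fun hVm x w hxw => ?_⟩
  rcases le_or_gt w (m - B) with h | h
  · rw [part1 x (hxw.trans h), part1 w h]
    exact hVm (by linarith)
  · rw [part2 w h, hW]
    exact min_le_left _ _
end
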